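/- Let (u_j)_{j=1}^l be a classical solution of the regularized thin-film system on the graph on [0,T] with 1 ≤ n ≤ 2. Assume: (a) for every t ∈ [0,T] there exists s₀ ∈ [0,1] with ∑_{j=1}^l [ u_j(s₀,t) w_j(s₀,t) + (1/2)(∂_s u_j(s₀,t))² ] ≤ 0, and (b) there is a constant C > 0 such that ∑_{j=1}^l ∫₀¹ |u_j(s,t)|^{2−n} ds ≤ C for all t ∈ [0,T]. Then the energy E(t) := (1/2)∑_{j=1}^l ∫₀¹ (∂_s u_j(s,t))² ds satisfies the algebraic decay estimate E(t) ≤ E(0) / (1 + (9/C) E(0) t) for all t ∈ [0,T]. -/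

import Mathlib

open Set MeasureTheory intervalIntegral Real Filter

/-- The regularized mobility `f_ε(z) = |z|^n + ε`. -/
noncomputable def tfeF (n ε z : ℝ) : ℝ := |z| ^ n + ε

/-- `w = -∂_s² u` for a function `u = u(s,t)` of two variables. -/
noncomputable def tfeW (u : ℝ → ℝ → ℝ) (s t : ℝ) : ℝ :=
  -(iteratedDeriv 2 (fun x => u x t) s)

/-- A classical solution of the regularized thin-film system on a metric graph with
edges `j : Fin l` (parameterized over `[0,1]`, with tail vertex `tl j` at `s = 0` and
head vertex `hd j` at `s = 1`), boundary vertex set `bdry`, on the time interval `[0,T]`. -/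
structure IsGraphTFESolution {l m : ℕ} (n ε T : ℝ) (tl hd : Fin l → Fin m)
    (bdry : Set (Fin m)) (u : Fin l → ℝ → ℝ → ℝ) : Prop where
  /-- regularity (in particular `C^{4,1}`) -/
  smooth : ∀ j, ContDiff ℝ 4 (fun p : ℝ × ℝ => u j p.1 p.2)
  /-- the PDE `∂_t u_j = ∂_s (f_ε(u_j) ∂_s w_j)` -/
  pde : ∀ j, ∀ s ∈ Icc (0:ℝ) 1, ∀ t ∈ Icc (0:ℝ) T,
    deriv (fun τ => u j s τ) t
      = deriv (fun x => tfeF n ε (u j x t) * deriv (fun y => tfeW (u j) y t) x) s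
  /-- continuity of `u` at interior vertices -/
  cont_u_hh : ∀ a ∉ bdry, ∀ t ∈ Icc (0:ℝ) T, ∀ j j', hd j = a → hd j' = a →
    u j 1 t = u j' 1 t
  cont_u_tt : ∀ a ∉ bdry, ∀ t ∈ Icc (0:ℝ) T, ∀ i i', tl i = a → tl i' = a →
    u i 0 t = u i' 0 t
  cont_u_ht : ∀ a ∉ bdry, ∀ t ∈ Icc (0:ℝ) T, ∀ j i, hd j = a → tl i = a →
    u j 1 t = u i 0 t
  /-- continuity of `w` at interior vertices -/
  cont_w_hh : ∀ a ∉ bdry, ∀ t ∈ Icc (0:ℝ) T, ∀ j j', hd j = a → hd j' = a →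
    tfeW (u j) 1 t = tfeW (u j') 1 t
  cont_w_tt : ∀ a ∉ bdry, ∀ t ∈ Icc (0:ℝ) T, ∀ i i', tl i = a → tl i' = a →
    tfeW (u i) 0 t = tfeW (u i') 0 t
  cont_w_ht : ∀ a ∉ bdry, ∀ t ∈ Icc (0:ℝ) T, ∀ j i, hd j = a → tl i = a →
    tfeW (u j) 1 t = tfeW (u i) 0 t
  /-- Kirchhoff balance of `∂_s u` at interior vertices -/
  kirchhoff_u : ∀ a ∉ bdry, ∀ t ∈ Icc (0:ℝ) T,
    ∑ j ∈ Finset.univ.filter (fun j => hd j = a), deriv (fun x => u j x t) 1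
      = ∑ i ∈ Finset.univ.filter (fun i => tl i = a), deriv (fun x => u i x t) 0
  /-- Kirchhoff balance of `∂_s w` at interior vertices -/
  kirchhoff_w : ∀ a ∉ bdry, ∀ t ∈ Icc (0:ℝ) T,
    ∑ j ∈ Finset.univ.filter (fun j => hd j = a), deriv (fun x => tfeW (u j) x t) 1
      = ∑ i ∈ Finset.univ.filter (fun i => tl i = a), deriv (fun x => tfeW (u i) x t) 0
  /-- no-flux conditions at boundary vertices (head side) -/
  bdry_head : ∀ a ∈ bdry, ∀ t ∈ Icc (0:ℝ) T, ∀ j, hd j = a →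
    deriv (fun x => u j x t) 1 = 0 ∧ deriv (fun x => tfeW (u j) x t) 1 = 0
  /-- no-flux conditions at boundary vertices (tail side) -/
  bdry_tail : ∀ a ∈ bdry, ∀ t ∈ Icc (0:ℝ) T, ∀ i, tl i = a →
    deriv (fun x => u i x t) 0 = 0 ∧ deriv (fun x => tfeW (u i) x t) 0 = 0

/-- partial derivative in the first variable -/
noncomputable def pdS (F : ℝ → ℝ → ℝ) (s t : ℝ) : ℝ := deriv (fun x => F x t) s

/-- partial derivative in the second variable -/
noncomputable def pdT (F : ℝ → ℝ → ℝ) (s t : ℝ) : ℝ := deriv (fun x => F s x) t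

lemma hasDerivAt_s_of_hasFDerivAt {F : ℝ → ℝ → ℝ} {L : ℝ × ℝ →L[ℝ] ℝ} {s t : ℝ}
    (h : HasFDerivAt (fun p : ℝ × ℝ => F p.1 p.2) L (s, t)) :
    HasDerivAt (fun x => F x t) (L (1, 0)) s := by
  have h2 : HasDerivAt (fun x : ℝ => (x, t)) ((1 : ℝ), (0 : ℝ)) s :=
    (hasDerivAt_id s).prodMk (hasDerivAt_const s t)
  exact HasFDerivAt.comp_hasDerivAt (f := fun x : ℝ => (x, t)) s h h2

lemma hasDerivAt_t_of_hasFDerivAt {F : ℝ → ℝ → ℝ} {L : ℝ × ℝ →L[ℝ] ℝ} {s t : ℝ}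
    (h : HasFDerivAt (fun p : ℝ × ℝ => F p.1 p.2) L (s, t)) :
    HasDerivAt (fun x => F s x) (L (0, 1)) t := by
  have h2 : HasDerivAt (fun x : ℝ => (s, x)) ((0 : ℝ), (1 : ℝ)) t :=
    (hasDerivAt_const t s).prodMk (hasDerivAt_id t)
  exact HasFDerivAt.comp_hasDerivAt (f := fun x : ℝ => (s, x)) t h h2

lemma pdS_hasDerivAt {F : ℝ → ℝ → ℝ} (h : ContDiff ℝ 1 (fun p : ℝ × ℝ => F p.1 p.2)) (s t : ℝ) :
    HasDerivAt (fun x => F x t) (pdS F s t) s := by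
  have := hasDerivAt_s_of_hasFDerivAt ((h.differentiable one_ne_zero) (s, t)).hasFDerivAt
  exact this.differentiableAt.hasDerivAt

lemma pdT_hasDerivAt {F : ℝ → ℝ → ℝ} (h : ContDiff ℝ 1 (fun p : ℝ × ℝ => F p.1 p.2)) (s t : ℝ) :
    HasDerivAt (fun x => F s x) (pdT F s t) t := by
  have := hasDerivAt_t_of_hasFDerivAt ((h.differentiable one_ne_zero) (s, t)).hasFDerivAt
  exact this.differentiableAt.hasDerivAt

lemma pdS_eq {F : ℝ → ℝ → ℝ} (h : ContDiff ℝ 1 (fun p : ℝ × ℝ => F p.1 p.2)) :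
    (fun p : ℝ × ℝ => pdS F p.1 p.2)
      = fun p => fderiv ℝ (fun p : ℝ × ℝ => F p.1 p.2) p (1, 0) := by
  funext p
  exact (hasDerivAt_s_of_hasFDerivAt ((h.differentiable one_ne_zero) p).hasFDerivAt).deriv

lemma pdT_eq {F : ℝ → ℝ → ℝ} (h : ContDiff ℝ 1 (fun p : ℝ × ℝ => F p.1 p.2)) :
    (fun p : ℝ × ℝ => pdT F p.1 p.2)
      = fun p => fderiv ℝ (fun p : ℝ × ℝ => F p.1 p.2) p (0, 1) := by
  funext p
  exact (hasDerivAt_t_of_hasFDerivAt ((h.differentiable one_ne_zero) p).hasFDerivAt).deriv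

lemma pdS_contDiff {F : ℝ → ℝ → ℝ} (k : ℕ)
    (h : ContDiff ℝ (k + 1 : ℕ) (fun p : ℝ × ℝ => F p.1 p.2)) :
    ContDiff ℝ k (fun p : ℝ × ℝ => pdS F p.1 p.2) := by
  rw [pdS_eq (h.of_le (by exact_mod_cast Nat.le_add_left 1 k))]
  exact (h.fderiv_right (m := k) (by push_cast; exact le_rfl)).clm_apply contDiff_const

lemma pdT_contDiff {F : ℝ → ℝ → ℝ} (k : ℕ)
    (h : ContDiff ℝ (k + 1 : ℕ) (fun p : ℝ × ℝ => F p.1 p.2)) :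
    ContDiff ℝ k (fun p : ℝ × ℝ => pdT F p.1 p.2) := by
  rw [pdT_eq (h.of_le (by exact_mod_cast Nat.le_add_left 1 k))]
  exact (h.fderiv_right (m := k) (by push_cast; exact le_rfl)).clm_apply contDiff_const

lemma pd_comm {F : ℝ → ℝ → ℝ} (h : ContDiff ℝ 2 (fun p : ℝ × ℝ => F p.1 p.2)) (s t : ℝ) :
    pdT (pdS F) s t = pdS (pdT F) s t := by
  have h1 : ContDiff ℝ 1 (fun p : ℝ × ℝ => F p.1 p.2) := h.of_le (by norm_num)
  have hf : ContDiff ℝ 1 (fderiv ℝ (fun p : ℝ × ℝ => F p.1 p.2)) :=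
    h.fderiv_right (by norm_num)
  have hd := ((hf.differentiable one_ne_zero) (s, t)).hasFDerivAt
  have a1 : HasFDerivAt (fun p : ℝ × ℝ => pdS F p.1 p.2)
      ((fderiv ℝ (fderiv ℝ (fun p : ℝ × ℝ => F p.1 p.2)) (s, t)).flip (1, 0)) (s, t) := by
    rw [pdS_eq h1]; simpa using hd.clm_apply (hasFDerivAt_const (𝕜 := ℝ) _ _)
  have a2 : HasFDerivAt (fun p : ℝ × ℝ => pdT F p.1 p.2)
      ((fderiv ℝ (fderiv ℝ (fun p : ℝ × ℝ => F p.1 p.2)) (s, t)).flip (0, 1)) (s, t) := by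
    rw [pdT_eq h1]; simpa using hd.clm_apply (hasFDerivAt_const (𝕜 := ℝ) _ _)
  have e1 := (hasDerivAt_t_of_hasFDerivAt a1).deriv
  have e2 := (hasDerivAt_s_of_hasFDerivAt a2).deriv
  have hs : IsSymmSndFDerivAt ℝ (fun p : ℝ × ℝ => F p.1 p.2) (s, t) :=
    h.contDiffAt.isSymmSndFDerivAt (by simp)
  have := hs (0, 1) (1, 0)
  unfold pdT at *
  unfold pdS at *
  rw [e1, e2]
  simpa using this

lemma tfeW_eq (u : ℝ → ℝ → ℝ) (s t : ℝ) : tfeW u s t = - pdS (pdS u) s t := by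
  unfold tfeW
  rw [iteratedDeriv_succ, iteratedDeriv_one]
  rfl

/-- differentiation under the integral sign -/
lemma hasDerivAt_integral_param {F : ℝ → ℝ → ℝ}
    (h : ContDiff ℝ 1 (fun p : ℝ × ℝ => F p.1 p.2)) (t : ℝ) :
    HasDerivAt (fun τ => ∫ s in (0:ℝ)..1, F s τ) (∫ s in (0:ℝ)..1, pdT F s t) t := by
  have hc : Continuous (fun p : ℝ × ℝ => pdT F p.1 p.2) := (pdT_contDiff 0 h).continuous
  obtain ⟨M, hM⟩ := (isCompact_Icc.prod isCompact_Icc :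
    IsCompact ((Icc (0:ℝ) 1) ×ˢ (Icc (t-1) (t+1)))).exists_bound_of_continuousOn hc.continuousOn
  have hFc : ∀ τ, Continuous (fun s => F s τ) := fun τ =>
    h.continuous.comp (continuous_id.prodMk continuous_const)
  have hTc : Continuous (fun s => pdT F s t) :=
    hc.comp (continuous_id.prodMk continuous_const)
  refine (intervalIntegral.hasDerivAt_integral_of_dominated_loc_of_deriv_le
    (F := fun τ s => F s τ) (F' := fun τ s => pdT F s τ) (bound := fun _ => M)
    (Icc_mem_nhds (show t - 1 < t by linarith) (show t < t + 1 by linarith)) ?_ ?_ ?_ ?_ ?_ ?_).2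
  · exact Eventually.of_forall fun τ => (hFc τ).aestronglyMeasurable
  · exact (hFc t).intervalIntegrable _ _
  · exact hTc.aestronglyMeasurable
  · refine Eventually.of_forall fun s hs τ hτ => hM (s, τ) ⟨?_, hτ⟩
    rw [uIoc_of_le zero_le_one] at hs
    exact ⟨hs.1.le, hs.2⟩
  · exact continuous_const.intervalIntegrable _ _
  · exact Eventually.of_forall fun s _ τ _ => pdT_hasDerivAt h s τ

/-- transversal zeros are countable -/
lemma countable_transversal {v v' : ℝ → ℝ} (hv : ∀ x, HasDerivAt v (v' x) x) :
    {x | v x = 0 ∧ v' x ≠ 0}.Countable := by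
  have hd : DiscreteTopology {x | v x = 0 ∧ v' x ≠ 0} := by
    rw [discreteTopology_subtype_iff]
    rintro x ⟨hx, hx'⟩
    have := (hv x).eventually_ne (c := 0) hx'
    rw [← Filter.empty_mem_iff_bot, Filter.mem_inf_principal]
    filter_upwards [this] with y hy hy2
    exact hy hy2.1
  exact (HereditarilyLindelofSpace.isLindelof _).countable hd

lemma differentiableAt_abs_rpow {v v' : ℝ → ℝ} (hv : ∀ x, HasDerivAt v (v' x) x) {n : ℝ}
    (hn : 1 ≤ n) (x : ℝ) (hx : ¬ (v x = 0 ∧ v' x ≠ 0)) :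
    DifferentiableAt ℝ (fun y => |v y| ^ n) x := by
  by_cases h0 : v x = 0
  · have h1 : v' x = 0 := by by_contra h; exact hx ⟨h0, h⟩
    have hd := hv x
    rw [h1] at hd
    have : HasDerivAt (fun y => |v y| ^ n) 0 x := by
      rw [hasDerivAt_iff_isLittleO] at hd ⊢
      simp only [h0, sub_zero, smul_zero, abs_zero, Real.zero_rpow (by linarith : n ≠ 0)] at hd ⊢
      refine Asymptotics.IsBigO.trans_isLittleO ?_ hd
      refine Asymptotics.IsBigO.of_bound 1 ?_
      have hc : Tendsto v (nhds x) (nhds 0) := h0 ▸ (hv x).continuousAt.tendsto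
      have := hc.eventually (Metric.ball_mem_nhds 0 one_pos)
      filter_upwards [this] with y hy
      have hy' : |v y| ≤ 1 := by simpa using (mem_ball_zero_iff.1 hy).le
      rw [Real.norm_eq_abs, Real.norm_eq_abs, one_mul, abs_of_nonneg (by positivity)]
      calc |v y| ^ n ≤ |v y| ^ (1:ℝ) := by
            by_cases hz : |v y| = 0
            · rw [hz, Real.zero_rpow (by linarith), Real.rpow_one]
            · exact Real.rpow_le_rpow_of_exponent_ge (lt_of_le_of_ne (abs_nonneg _) (Ne.symm hz)) hy' hn
        _ = |v y| := Real.rpow_one _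
    exact this.differentiableAt
  · exact ((hv x).differentiableAt.abs h0).rpow_const (Or.inl (abs_ne_zero.2 h0))

/-- vertex summation -/
lemma vertex_sum {l m : ℕ} (tl hd : Fin l → Fin m) (bdry : Set (Fin m))
    (A1 A0 B1 B0 : Fin l → ℝ)
    (hh : ∀ a ∉ bdry, ∀ j j', hd j = a → hd j' = a → A1 j = A1 j')
    (tt : ∀ a ∉ bdry, ∀ j j', tl j = a → tl j' = a → A0 j = A0 j')
    (ht : ∀ a ∉ bdry, ∀ j i, hd j = a → tl i = a → A1 j = A0 i)
    (K : ∀ a ∉ bdry, ∑ j ∈ Finset.univ.filter (fun j => hd j = a), B1 j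
      = ∑ i ∈ Finset.univ.filter (fun i => tl i = a), B0 i)
    (b1 : ∀ a ∈ bdry, ∀ j, hd j = a → B1 j = 0)
    (b0 : ∀ a ∈ bdry, ∀ j, tl j = a → B0 j = 0) :
    ∑ j, (A1 j * B1 j - A0 j * B0 j) = 0 := by
  rw [Finset.sum_sub_distrib, ← Finset.sum_fiberwise Finset.univ hd,
    ← Finset.sum_fiberwise Finset.univ tl, ← Finset.sum_sub_distrib]
  refine Finset.sum_eq_zero fun a _ => ?_
  by_cases ha : a ∈ bdry
  · rw [Finset.sum_eq_zero, Finset.sum_eq_zero, sub_zero]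
    · intro j hj; rw [b0 a ha j (Finset.mem_filter.1 hj).2, mul_zero]
    · intro j hj; rw [b1 a ha j (Finset.mem_filter.1 hj).2, mul_zero]
  · obtain ⟨c, hc1, hc0⟩ : ∃ c, (∀ j, hd j = a → A1 j = c) ∧ (∀ i, tl i = a → A0 i = c) := by
      by_cases h1 : ∃ j, hd j = a
      · obtain ⟨j, hj⟩ := h1
        exact ⟨A1 j, fun j' hj' => hh a ha j' j hj' hj, fun i hi => (ht a ha j i hj hi).symm⟩
      · by_cases h2 : ∃ i, tl i = a
        · obtain ⟨i, hi⟩ := h2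
          exact ⟨A0 i, fun j' hj' => ht a ha j' i hj' hi, fun i' hi' => tt a ha i' i hi' hi⟩
        · push Not at h1 h2
          exact ⟨0, fun j hj => absurd hj (h1 j), fun j hj => absurd hj (h2 j)⟩
    have e1 : ∑ j ∈ Finset.univ.filter (fun j => hd j = a), A1 j * B1 j
        = c * ∑ j ∈ Finset.univ.filter (fun j => hd j = a), B1 j := by
      rw [Finset.mul_sum]
      exact Finset.sum_congr rfl fun j hj => by rw [hc1 j (Finset.mem_filter.1 hj).2]
    have e0 : ∑ j ∈ Finset.univ.filter (fun j => tl j = a), A0 j * B0 j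
        = c * ∑ j ∈ Finset.univ.filter (fun j => tl j = a), B0 j := by
      rw [Finset.mul_sum]
      exact Finset.sum_congr rfl fun j hj => by rw [hc0 j (Finset.mem_filter.1 hj).2]
    rw [e1, e0, K a ha, sub_self]

/-- the Riccati comparison -/
lemma riccati {E D : ℝ → ℝ} {k T : ℝ} (hk : 0 < k)
    (hE0 : ∀ t, 0 ≤ E t) (hD : ∀ t ∈ Icc 0 T, HasDerivAt E (D t) t)
    (hle : ∀ t ∈ Icc 0 T, D t ≤ - (k * E t ^ 2)) :
    ∀ t ∈ Icc 0 T, E t ≤ E 0 / (1 + k * E 0 * t) := by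
  intro t ht
  have hpos : 0 < 1 + k * E 0 * t := by
    have := mul_nonneg (mul_nonneg hk.le (hE0 0)) ht.1
    linarith
  have hanti : AntitoneOn E (Icc 0 T) := by
    refine antitoneOn_of_hasDerivWithinAt_nonpos (convex_Icc 0 T)
      (fun x hx => (hD x hx).continuousAt.continuousWithinAt) (f' := D)
      (fun x hx => (hD x (interior_subset hx)).hasDerivWithinAt) ?_
    intro x hx
    have := hle x (interior_subset hx)
    have : 0 ≤ k * E x ^ 2 := by positivity
    linarith
  rcases (hE0 t).eq_or_lt with h | h
  · rw [← h]; exact div_nonneg (hE0 0) hpos.le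
  have hsub : ∀ x ∈ Icc 0 t, x ∈ Icc 0 T := fun x hx => ⟨hx.1, hx.2.trans ht.2⟩
  have hEp : ∀ x ∈ Icc 0 t, 0 < E x := fun x hx =>
    lt_of_lt_of_le h (hanti (hsub x hx) ht hx.2)
  have hmono : MonotoneOn (fun x => (E x)⁻¹ - k * x) (Icc 0 t) := by
    have hder : ∀ x ∈ Icc 0 t, HasDerivAt (fun x => (E x)⁻¹ - k * x)
        (- D x / E x ^ 2 - k * 1) x := fun x hx =>
      ((hD x (hsub x hx)).inv (hEp x hx).ne').sub ((hasDerivAt_id x).const_mul k)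
    refine monotoneOn_of_hasDerivWithinAt_nonneg (convex_Icc 0 t)
      (fun x hx => (hder x hx).continuousAt.continuousWithinAt)
      (fun x hx => (hder x (interior_subset hx)).hasDerivWithinAt) ?_
    intro x hx
    have hx' := interior_subset hx
    have h1 := hle x (hsub x hx')
    have h2 : 0 < E x ^ 2 := pow_pos (hEp x hx') 2
    have : k ≤ - D x / E x ^ 2 := by rw [le_div_iff₀ h2]; linarith
    linarith
  have h0 : (0:ℝ) ∈ Icc 0 t := ⟨le_rfl, ht.1⟩
  have h1 := hmono h0 ⟨ht.1, le_rfl⟩ ht.1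
  have hp0 := hEp 0 h0
  simp only [mul_zero, sub_zero] at h1
  rw [le_div_iff₀ hpos]
  have h2 : (E 0)⁻¹ + k * t ≤ (E t)⁻¹ := by linarith
  have h3 := mul_le_mul_of_nonneg_left h2 (mul_pos h hp0).le
  have e1 : E t * E 0 * ((E 0)⁻¹ + k * t) = E t * (1 + k * E 0 * t) := by field_simp
  have e2 : E t * E 0 * (E t)⁻¹ = E 0 := by field_simp
  rw [e1, e2] at h3
  exact h3

lemma slice_cont {F : ℝ → ℝ → ℝ} (h : Continuous (fun p : ℝ × ℝ => F p.1 p.2)) (t : ℝ) :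
    Continuous (fun s => F s t) := h.comp (continuous_id.prodMk continuous_const)

lemma tfeW_fun_eq (u : ℝ → ℝ → ℝ) : tfeW u = fun s t => - pdS (pdS u) s t := by
  funext s t; exact tfeW_eq u s t

lemma tfeW_contDiff {u : ℝ → ℝ → ℝ} (h : ContDiff ℝ 4 (fun p : ℝ × ℝ => u p.1 p.2)) :
    ContDiff ℝ 2 (fun p : ℝ × ℝ => tfeW u p.1 p.2) := by
  rw [tfeW_fun_eq]
  exact (pdS_contDiff 2 (pdS_contDiff 3 h)).neg

lemma edge_energy {u : ℝ → ℝ → ℝ} (h : ContDiff ℝ 4 (fun p : ℝ × ℝ => u p.1 p.2))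
    {n ε t : ℝ} (hn : 1 ≤ n)
    (pde : ∀ s ∈ Icc (0:ℝ) 1, pdT u s t
      = deriv (fun x => tfeF n ε (u x t) * pdS (tfeW u) x t) s) :
    (∫ s in (0:ℝ)..1, pdT (fun s τ => (pdS u s τ) ^ 2) s t)
      = 2 * ((pdT u 1 t * pdS u 1 t - pdT u 0 t * pdS u 0 t)
        + ((tfeW u 1 t * tfeF n ε (u 1 t)) * pdS (tfeW u) 1 t
            - (tfeW u 0 t * tfeF n ε (u 0 t)) * pdS (tfeW u) 0 t)
        - ∫ s in (0:ℝ)..1, tfeF n ε (u s t) * pdS (tfeW u) s t ^ 2) := by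
  have hS : ContDiff ℝ 3 (fun p : ℝ × ℝ => pdS u p.1 p.2) := pdS_contDiff 3 h
  have hT : ContDiff ℝ 3 (fun p : ℝ × ℝ => pdT u p.1 p.2) := pdT_contDiff 3 h
  have hST : ContDiff ℝ 2 (fun p : ℝ × ℝ => pdS (pdT u) p.1 p.2) := pdS_contDiff 2 hT
  have hSS : ContDiff ℝ 2 (fun p : ℝ × ℝ => pdS (pdS u) p.1 p.2) := pdS_contDiff 2 hS
  have hW := tfeW_contDiff h
  have hWS : ContDiff ℝ 1 (fun p : ℝ × ℝ => pdS (tfeW u) p.1 p.2) := pdS_contDiff 1 hW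
  have h1 : ContDiff ℝ 1 (fun p : ℝ × ℝ => u p.1 p.2) := h.of_le (by norm_num)
  have hS1 : ContDiff ℝ 1 (fun p : ℝ × ℝ => pdS u p.1 p.2) := hS.of_le (by norm_num)
  have hT1 : ContDiff ℝ 1 (fun p : ℝ × ℝ => pdT u p.1 p.2) := hT.of_le (by norm_num)
  have hW1 : ContDiff ℝ 1 (fun p : ℝ × ℝ => tfeW u p.1 p.2) := hW.of_le (by norm_num)
  have cu := slice_cont h.continuous t
  have cS := slice_cont hS.continuous t
  have cT := slice_cont hT.continuous t
  have cST := slice_cont hST.continuous t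
  have cW := slice_cont hW.continuous t
  have cWS := slice_cont hWS.continuous t
  have cf : Continuous (fun s => tfeF n ε (u s t)) := by
    unfold tfeF
    exact (cu.abs.rpow_const (fun x => Or.inr (by linarith))).add continuous_const
  -- time derivative of the integrand
  have e0 : ∀ s, pdT (fun s τ => (pdS u s τ) ^ 2) s t = 2 * (pdS u s t * pdS (pdT u) s t) := by
    intro s
    have := ((pdT_hasDerivAt hS1 s t).pow 2).deriv
    have h2 := pd_comm (h.of_le (by norm_num)) s t
    rw [← h2]
    unfold pdT at this ⊢
    refine Eq.trans this ?_
    push_cast; ring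
  -- first integration by parts
  have i1 : (∫ s in (0:ℝ)..1, (pdS u s t * pdS (pdT u) s t - tfeW u s t * pdT u s t))
      = pdT u 1 t * pdS u 1 t - pdT u 0 t * pdS u 0 t := by
    refine integral_eq_sub_of_hasDerivAt (f := fun s => pdT u s t * pdS u s t) (fun s _ => ?_)
      (((cS.mul cST).sub (cW.mul cT)).intervalIntegrable _ _)
    have := (pdS_hasDerivAt hT1 s t).mul (pdS_hasDerivAt hS1 s t)
    refine this.congr_deriv ?_
    rw [tfeW_eq]; ring
  -- second integration by parts
  have i2 : (∫ s in (0:ℝ)..1, (tfeW u s t * pdT u s t + tfeF n ε (u s t) * pdS (tfeW u) s t ^ 2))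
      = (tfeW u 1 t * tfeF n ε (u 1 t)) * pdS (tfeW u) 1 t
            - (tfeW u 0 t * tfeF n ε (u 0 t)) * pdS (tfeW u) 0 t := by
    refine integral_eq_of_hasDerivAt_off_countable_of_le
      (fun s => (tfeW u s t * tfeF n ε (u s t)) * pdS (tfeW u) s t) _ zero_le_one
      (countable_transversal (fun s => pdS_hasDerivAt h1 s t))
      ((cW.mul cf).mul cWS).continuousOn ?_
      (((cW.mul cT).add (cf.mul (cWS.pow 2))).intervalIntegrable _ _)
    rintro s ⟨hs, hs2⟩
    have hd := differentiableAt_abs_rpow (fun s => pdS_hasDerivAt h1 s t) hn s hs2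
    have hf : DifferentiableAt ℝ (fun x => tfeF n ε (u x t)) s := hd.add_const ε
    have hG := (hf.mul (pdS_hasDerivAt hWS s t).differentiableAt).hasDerivAt
    have hp := pde s ⟨hs.1.le, hs.2.le⟩
    have hG2 : HasDerivAt (fun x => tfeF n ε (u x t) * pdS (tfeW u) x t) (pdT u s t) s := by
      rw [hp]; exact hG
    have := (pdS_hasDerivAt hW1 s t).mul hG2
    refine (this.congr_deriv ?_).congr_of_eventuallyEq (Eventually.of_forall fun x => ?_)
    · ring
    · simp only [Pi.mul_apply]; ring
  have c1 : Continuous (fun s => pdS u s t * pdS (pdT u) s t) := cS.mul cST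
  have c2 : Continuous (fun s => tfeW u s t * pdT u s t) := cW.mul cT
  have c3 : Continuous (fun s => tfeF n ε (u s t) * pdS (tfeW u) s t ^ 2) := cf.mul (cWS.pow 2)
  rw [intervalIntegral.integral_sub (c1.intervalIntegrable _ _)
    (c2.intervalIntegrable _ _)] at i1
  rw [intervalIntegral.integral_add (c2.intervalIntegrable _ _)
    (c3.intervalIntegrable _ _)] at i2
  simp_rw [e0]
  rw [intervalIntegral.integral_const_mul]
  linarith

lemma edge_P {u : ℝ → ℝ → ℝ} (h : ContDiff ℝ 4 (fun p : ℝ × ℝ => u p.1 p.2)) (t : ℝ) :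
    Continuous (fun s => u s t * tfeW u s t + (1 / 2) * (pdS u s t) ^ 2) ∧
    Continuous (fun s => u s t * pdS (tfeW u) s t) ∧
    (∫ s in (0:ℝ)..1, (u s t * tfeW u s t + (1 / 2) * (pdS u s t) ^ 2))
      = (3 / 2) * (∫ s in (0:ℝ)..1, pdS u s t ^ 2) - (u 1 t * pdS u 1 t - u 0 t * pdS u 0 t) ∧
    ∀ a ∈ Icc (0:ℝ) 1, ∀ b ∈ Icc (0:ℝ) 1,
      u b t * tfeW u b t + (1 / 2) * (pdS u b t) ^ 2
        ≤ u a t * tfeW u a t + (1 / 2) * (pdS u a t) ^ 2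
          + ∫ s in (0:ℝ)..1, |u s t * pdS (tfeW u) s t| := by
  have hS : ContDiff ℝ 3 (fun p : ℝ × ℝ => pdS u p.1 p.2) := pdS_contDiff 3 h
  have hW := tfeW_contDiff h
  have hWS : ContDiff ℝ 1 (fun p : ℝ × ℝ => pdS (tfeW u) p.1 p.2) := pdS_contDiff 1 hW
  have h1 : ContDiff ℝ 1 (fun p : ℝ × ℝ => u p.1 p.2) := h.of_le (by norm_num)
  have hS1 : ContDiff ℝ 1 (fun p : ℝ × ℝ => pdS u p.1 p.2) := hS.of_le (by norm_num)
  have hW1 : ContDiff ℝ 1 (fun p : ℝ × ℝ => tfeW u p.1 p.2) := hW.of_le (by norm_num)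
  have cu := slice_cont h.continuous t
  have cS := slice_cont hS.continuous t
  have cW := slice_cont hW.continuous t
  have cWS := slice_cont hWS.continuous t
  refine ⟨by fun_prop, by fun_prop, ?_, ?_⟩
  · have i1 : (∫ s in (0:ℝ)..1, (pdS u s t ^ 2 - u s t * tfeW u s t))
        = u 1 t * pdS u 1 t - u 0 t * pdS u 0 t := by
      refine integral_eq_sub_of_hasDerivAt (f := fun s => u s t * pdS u s t) (fun s _ => ?_)
        (((cS.pow 2).sub (cu.mul cW)).intervalIntegrable _ _)
      have := (pdS_hasDerivAt h1 s t).mul (pdS_hasDerivAt hS1 s t)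
      refine this.congr_deriv ?_
      rw [tfeW_eq]; ring
    have c1 : Continuous (fun s => pdS u s t ^ 2) := cS.pow 2
    have c2 : Continuous (fun s => u s t * tfeW u s t) := cu.mul cW
    have c3 : Continuous (fun s => (1 / 2) * pdS u s t ^ 2) := continuous_const.mul c1
    rw [intervalIntegral.integral_sub (c1.intervalIntegrable _ _)
      (c2.intervalIntegrable _ _)] at i1
    rw [intervalIntegral.integral_add (c2.intervalIntegrable _ _)
      (c3.intervalIntegrable _ _),
      intervalIntegral.integral_const_mul]
    linarith
  · intro a ha b hb
    have i2 : (∫ s in a..b, u s t * pdS (tfeW u) s t)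
        = (u b t * tfeW u b t + (1 / 2) * (pdS u b t) ^ 2)
          - (u a t * tfeW u a t + (1 / 2) * (pdS u a t) ^ 2) := by
      refine integral_eq_sub_of_hasDerivAt
        (f := fun s => u s t * tfeW u s t + (1 / 2) * (pdS u s t) ^ 2) (fun s _ => ?_)
        ((cu.mul cWS).intervalIntegrable _ _)
      have := ((pdS_hasDerivAt h1 s t).mul (pdS_hasDerivAt hW1 s t)).add
        (((pdS_hasDerivAt hS1 s t).pow 2).const_mul (1 / 2))
      refine this.congr_deriv ?_
      rw [tfeW_eq]; push_cast; ring
    have i3 : |∫ s in a..b, u s t * pdS (tfeW u) s t|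
        ≤ ∫ s in (0:ℝ)..1, |u s t * pdS (tfeW u) s t| := by
      refine (intervalIntegral.norm_integral_le_integral_norm_uIoc
        (f := fun s => u s t * pdS (tfeW u) s t) (μ := volume)).trans ?_
      rw [intervalIntegral.integral_of_le zero_le_one]
      refine setIntegral_mono_set ?_ (Eventually.of_forall fun x => abs_nonneg _)
        (LE.le.eventuallyLE ?_)
      · exact ((cu.mul cWS).abs.intervalIntegrable (μ := volume) 0 1).1
      · intro x hx
        exact ⟨lt_of_le_of_lt (le_min ha.1 hb.1) hx.1, hx.2.trans (max_le ha.2 hb.2)⟩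
    have := (le_abs_self _).trans i3
    linarith

lemma edge_young {n lam z y : ℝ} (hl : 0 < lam) :
    2 * |z * y| ≤ lam * (|z| ^ n * y ^ 2) + lam⁻¹ * |z| ^ (2 - n) := by
  have ha : 0 ≤ |z| := abs_nonneg z
  have e : |z| ^ n * |z| ^ (2 - n) = |z| ^ 2 := by
    rw [← Real.rpow_add' ha (by norm_num)]
    norm_num
  have hA : 0 ≤ |z| ^ n := Real.rpow_nonneg ha _
  have hB : 0 ≤ |z| ^ (2 - n) := Real.rpow_nonneg ha _
  set A := |z| ^ n
  set B := |z| ^ (2 - n)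
  have hR : 0 ≤ lam * (A * y ^ 2) + lam⁻¹ * B := by positivity
  refine abs_le_of_sq_le_sq' ?_ hR |>.2
  have e2 : (2 * |z * y|) ^ 2 = 4 * (lam * (A * y ^ 2)) * (lam⁻¹ * B) := by
    rw [abs_mul, mul_pow, mul_pow, ← e, sq_abs y]
    field_simp
    ring
  rw [e2]
  nlinarith [sq_nonneg (lam * (A * y ^ 2) - lam⁻¹ * B)]

/-- algebraic decay of the energy for classical solutions of the
regularized thin-film system on a graph, `1 ≤ n ≤ 2`. -/
theorem energy_algebraic_decay {l m : ℕ} (hl : 1 ≤ l) (hm : 1 ≤ m)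
    (n ε T : ℝ) (hn : 1 ≤ n) (hn2 : n ≤ 2) (hε : 0 < ε) (hT : 0 < T)
    (tl hd : Fin l → Fin m) (bdry : Set (Fin m)) (u : Fin l → ℝ → ℝ → ℝ)
    (hu : IsGraphTFESolution n ε T tl hd bdry u)
    (hneg : ∀ t ∈ Icc (0:ℝ) T, ∃ s₀ ∈ Icc (0:ℝ) 1,
      ∑ j : Fin l,
        (u j s₀ t * tfeW (u j) s₀ t + (1 / 2) * (deriv (fun x => u j x t) s₀) ^ 2) ≤ 0)
    (C : ℝ) (hC : 0 < C)
    (hbound : ∀ t ∈ Icc (0:ℝ) T,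
      ∑ j : Fin l, (∫ s in (0:ℝ)..1, |u j s t| ^ (2 - n)) ≤ C) :
    ∀ t ∈ Icc (0:ℝ) T,
      (1 / 2) * ∑ j : Fin l, (∫ s in (0:ℝ)..1, (deriv (fun x => u j x t) s) ^ 2)
        ≤ ((1 / 2) * ∑ j : Fin l, (∫ s in (0:ℝ)..1, (deriv (fun x => u j x 0) s) ^ 2))
          / (1 + (9 / C)
              * ((1 / 2) * ∑ j : Fin l, (∫ s in (0:ℝ)..1, (deriv (fun x => u j x 0) s) ^ 2))
              * t) := by
  have hsm := hu.smooth
  -- the time derivative of the energy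
  have hder : ∀ t, HasDerivAt
      (fun t => (1 / 2) * ∑ j : Fin l, (∫ s in (0:ℝ)..1, (deriv (fun x => u j x t) s) ^ 2))
      ((1 / 2) * ∑ j : Fin l, (∫ s in (0:ℝ)..1, pdT (fun s τ => (pdS (u j) s τ) ^ 2) s t)) t := by
    intro t
    refine HasDerivAt.const_mul _ (HasDerivAt.fun_sum fun j _ => ?_)
    have hS : ContDiff ℝ 3 (fun p : ℝ × ℝ => pdS (u j) p.1 p.2) := pdS_contDiff 3 (hsm j)
    exact hasDerivAt_integral_param (F := fun s τ => (pdS (u j) s τ) ^ 2)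
      ((hS.of_le (by norm_num)).pow 2) t
  refine riccati (E := fun t => (1 / 2) * ∑ j : Fin l,
      (∫ s in (0:ℝ)..1, (deriv (fun x => u j x t) s) ^ 2)) (k := 9 / C) (by positivity) ?_
    (fun t _ => hder t) ?_
  · intro t
    refine mul_nonneg (by norm_num) (Finset.sum_nonneg fun j _ => ?_)
    exact intervalIntegral.integral_nonneg zero_le_one fun s _ => sq_nonneg _
  intro t ht
  have hT1 : ∀ j, ContDiff ℝ 1 (fun p : ℝ × ℝ => u j p.1 p.2) := fun j =>
    (hsm j).of_le (by norm_num)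
  -- time derivatives agree where the functions agree
  have hagree : ∀ (j i : Fin l) (a b : ℝ), (∀ τ ∈ Icc (0:ℝ) T, u j a τ = u i b τ) →
      pdT (u j) a t = pdT (u i) b t := by
    intro j i a b hab
    have d1 := (pdT_hasDerivAt (hT1 j) a t).hasDerivWithinAt (s := Icc 0 T)
    have d2 := (pdT_hasDerivAt (hT1 i) b t).hasDerivWithinAt (s := Icc 0 T)
    exact (uniqueDiffOn_Icc hT t ht).eq_deriv _ d1 (d2.congr hab (hab t ht))
  have v1 := vertex_sum tl hd bdry (fun j => pdT (u j) 1 t) (fun j => pdT (u j) 0 t)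
    (fun j => pdS (u j) 1 t) (fun j => pdS (u j) 0 t)
    (fun a ha j j' h h' => hagree j j' 1 1 fun τ hτ => hu.cont_u_hh a ha τ hτ j j' h h')
    (fun a ha j j' h h' => hagree j j' 0 0 fun τ hτ => hu.cont_u_tt a ha τ hτ j j' h h')
    (fun a ha j j' h h' => hagree j j' 1 0 fun τ hτ => hu.cont_u_ht a ha τ hτ j j' h h')
    (fun a ha => hu.kirchhoff_u a ha t ht)
    (fun a ha j h => (hu.bdry_head a ha t ht j h).1)
    (fun a ha j h => (hu.bdry_tail a ha t ht j h).1)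
  have v2 := vertex_sum tl hd bdry
    (fun j => tfeW (u j) 1 t * tfeF n ε (u j 1 t)) (fun j => tfeW (u j) 0 t * tfeF n ε (u j 0 t))
    (fun j => pdS (tfeW (u j)) 1 t) (fun j => pdS (tfeW (u j)) 0 t)
    (fun a ha j j' h h' => by
      simp only [hu.cont_u_hh a ha t ht j j' h h', hu.cont_w_hh a ha t ht j j' h h'])
    (fun a ha j j' h h' => by
      simp only [hu.cont_u_tt a ha t ht j j' h h', hu.cont_w_tt a ha t ht j j' h h'])
    (fun a ha j j' h h' => by
      simp only [hu.cont_u_ht a ha t ht j j' h h', hu.cont_w_ht a ha t ht j j' h h'])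
    (fun a ha => hu.kirchhoff_w a ha t ht)
    (fun a ha j h => (hu.bdry_head a ha t ht j h).2)
    (fun a ha j h => (hu.bdry_tail a ha t ht j h).2)
  have v3 := vertex_sum tl hd bdry (fun j => u j 1 t) (fun j => u j 0 t)
    (fun j => pdS (u j) 1 t) (fun j => pdS (u j) 0 t)
    (fun a ha j j' h h' => hu.cont_u_hh a ha t ht j j' h h')
    (fun a ha j j' h h' => hu.cont_u_tt a ha t ht j j' h h')
    (fun a ha j j' h h' => hu.cont_u_ht a ha t ht j j' h h')
    (fun a ha => hu.kirchhoff_u a ha t ht)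
    (fun a ha j h => (hu.bdry_head a ha t ht j h).1)
    (fun a ha j h => (hu.bdry_tail a ha t ht j h).1)
  -- energy dissipation identity
  have hdis : (1 / 2) * ∑ j : Fin l, (∫ s in (0:ℝ)..1, pdT (fun s τ => (pdS (u j) s τ) ^ 2) s t)
      = - ∑ j : Fin l, ∫ s in (0:ℝ)..1, tfeF n ε (u j s t) * pdS (tfeW (u j)) s t ^ 2 := by
    rw [Finset.sum_congr rfl fun j _ =>
      edge_energy (hsm j) (n := n) (ε := ε) hn (fun s hs => hu.pde j s hs t ht),
      ← Finset.mul_sum, Finset.sum_sub_distrib, Finset.sum_add_distrib, v1, v2]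
    ring
  have cu : ∀ j, Continuous (fun s => u j s t) := fun j => slice_cont (hsm j).continuous t
  have cWS : ∀ j, Continuous (fun s => pdS (tfeW (u j)) s t) := fun j =>
    slice_cont (F := pdS (tfeW (u j))) (pdS_contDiff 1 (tfeW_contDiff (hsm j))).continuous t
  have cA : ∀ j, Continuous (fun s => |u j s t| ^ n * pdS (tfeW (u j)) s t ^ 2) := fun j =>
    ((cu j).abs.rpow_const (fun x => Or.inr (by linarith))).mul ((cWS j).pow 2)
  have cB : ∀ j, Continuous (fun s => |u j s t| ^ (2 - n)) := fun j =>
    (cu j).abs.rpow_const (fun x => Or.inr (by linarith))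
  have cF : ∀ j, Continuous (fun s => tfeF n ε (u j s t) * pdS (tfeW (u j)) s t ^ 2) := fun j =>
    (((cu j).abs.rpow_const (fun x => Or.inr (by linarith))).add continuous_const).mul
      ((cWS j).pow 2)
  have cK : ∀ j, Continuous (fun s => |u j s t * pdS (tfeW (u j)) s t|) := fun j =>
    ((cu j).mul (cWS j)).abs
  set E : ℝ := (1 / 2) * ∑ j : Fin l, (∫ s in (0:ℝ)..1, (deriv (fun x => u j x t) s) ^ 2) with hE
  set D : ℝ := ∑ j : Fin l, ∫ s in (0:ℝ)..1, |u j s t| ^ n * pdS (tfeW (u j)) s t ^ 2 with hDdef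
  have hDle : D ≤ ∑ j : Fin l, ∫ s in (0:ℝ)..1, tfeF n ε (u j s t) * pdS (tfeW (u j)) s t ^ 2 := by
    refine Finset.sum_le_sum fun j _ => ?_
    refine intervalIntegral.integral_mono_on zero_le_one ((cA j).intervalIntegrable _ _)
      ((cF j).intervalIntegrable _ _) fun s _ => ?_
    refine mul_le_mul_of_nonneg_right ?_ (sq_nonneg _)
    unfold tfeF
    linarith
  have hD0 : 0 ≤ D := Finset.sum_nonneg fun j _ =>
    intervalIntegral.integral_nonneg zero_le_one fun s _ => by positivity
  have hEn : 0 ≤ E := mul_nonneg (by norm_num) (Finset.sum_nonneg fun j _ =>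
    intervalIntegral.integral_nonneg zero_le_one fun s _ => sq_nonneg _)
  -- `3 E ≤ ∑ ∫ |u w_s|`
  have h3E : 3 * E ≤ ∑ j : Fin l, ∫ s in (0:ℝ)..1, |u j s t * pdS (tfeW (u j)) s t| := by
    obtain ⟨s₀, hs₀, hP0⟩ := hneg t ht
    set K := ∑ j : Fin l, ∫ s in (0:ℝ)..1, |u j s t * pdS (tfeW (u j)) s t| with hK
    have hcP : ∀ j, Continuous
        (fun s => u j s t * tfeW (u j) s t + (1 / 2) * (pdS (u j) s t) ^ 2) := fun j =>
      (edge_P (hsm j) t).1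
    have e1 : (∫ s in (0:ℝ)..1, ∑ j : Fin l,
        (u j s t * tfeW (u j) s t + (1 / 2) * (pdS (u j) s t) ^ 2)) = 3 * E := by
      rw [intervalIntegral.integral_finsetSum fun j _ => (hcP j).intervalIntegrable _ _,
        Finset.sum_congr rfl fun j _ => (edge_P (hsm j) t).2.2.1, Finset.sum_sub_distrib, v3,
        ← Finset.mul_sum, hE]
      simp only [pdS]
      ring
    have e2 : (∫ s in (0:ℝ)..1, ∑ j : Fin l,
        (u j s t * tfeW (u j) s t + (1 / 2) * (pdS (u j) s t) ^ 2)) ≤ ∫ s in (0:ℝ)..1, K := by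
      refine intervalIntegral.integral_mono_on zero_le_one
        ((continuous_finsetSum _ fun j _ => hcP j).intervalIntegrable _ _)
        (continuous_const.intervalIntegrable _ _) fun s hs => ?_
      have := Finset.sum_le_sum fun j (_ : j ∈ Finset.univ) =>
        (edge_P (hsm j) t).2.2.2 s₀ hs₀ s hs
      refine this.trans ?_
      rw [Finset.sum_add_distrib]
      have : ∑ j : Fin l, (u j s₀ t * tfeW (u j) s₀ t + (1 / 2) * (pdS (u j) s₀ t) ^ 2) ≤ 0 := hP0
      linarith
    rw [e1] at e2
    simpa using e2
  -- Cauchy-Schwarz in Young form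
  have hY : ∀ lam : ℝ, 0 < lam → 6 * E ≤ lam * D + lam⁻¹ * C := by
    intro lam hlam
    have : 2 * ∑ j : Fin l, (∫ s in (0:ℝ)..1, |u j s t * pdS (tfeW (u j)) s t|)
        ≤ lam * D + lam⁻¹ * ∑ j : Fin l, (∫ s in (0:ℝ)..1, |u j s t| ^ (2 - n)) := by
      rw [hDdef, Finset.mul_sum, Finset.mul_sum, Finset.mul_sum, ← Finset.sum_add_distrib]
      refine Finset.sum_le_sum fun j _ => ?_
      have cA2 : Continuous (fun s => lam * (|u j s t| ^ n * pdS (tfeW (u j)) s t ^ 2)) :=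
        continuous_const.mul (cA j)
      have cB2 : Continuous (fun s => lam⁻¹ * |u j s t| ^ (2 - n)) :=
        continuous_const.mul (cB j)
      rw [← intervalIntegral.integral_const_mul, ← intervalIntegral.integral_const_mul,
        ← intervalIntegral.integral_const_mul, ← intervalIntegral.integral_add
          (cA2.intervalIntegrable _ _) (cB2.intervalIntegrable _ _)]
      refine intervalIntegral.integral_mono_on zero_le_one
        ((continuous_const.mul (cK j)).intervalIntegrable _ _)
        ((cA2.add cB2).intervalIntegrable _ _) fun s _ => ?_
      exact edge_young hlam
    have h2 := mul_le_mul_of_nonneg_left (hbound t ht) (inv_pos.2 hlam).le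
    linarith
  have hfin : 9 / C * E ^ 2 ≤ D := by
    rcases hEn.eq_or_lt with h0 | hpos
    · rw [← h0]; simpa using hD0
    · have h := hY (C / (3 * E)) (by positivity)
      have e : (C / (3 * E))⁻¹ * C = 3 * E := by field_simp
      rw [e] at h
      have h' : 3 * E ≤ C / (3 * E) * D := by linarith
      have h2 := mul_le_mul_of_nonneg_left h' (show 0 ≤ 3 * E / C by positivity)
      have e1 : 3 * E / C * (C / (3 * E) * D) = D := by field_simp
      rw [e1] at h2
      calc 9 / C * E ^ 2 = 3 * E / C * (3 * E) := by ring
        _ ≤ D := h2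
  rw [hdis]
  linarith
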